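/- Let d ≥ 2, let E : Fin d → ℝ be injective, and let p : Fin d → ℝ be a probability distribution (p ≥ 0, Σ_i p(i) = 1) with mean ε = Σ_i p(i) E(i). Then there exist K ≤ d−1, and for each k ∈ {1,...,K} a diagonal operator M_k = Σ_i √(p(k|i)) |i⟩⟨i| on ℂ^d, where p(k|·) are conditional probabilities satisfying Σ_k p(k|i) = 1 for every i with p(i) > 0, such that for the family of unit vectors ψ_θ := Σ_i √(p(i)) e^{−iθE(i)} |i⟩ (θ ∈ ℝ): (a) the outcome probabilities p_k := ‖M_k ψ_θ‖² = Σ_i p(k|i) p(i) are independent of θ; (b) whenever p_k > 0, the normalized post-measurement state M_k ψ_θ / ‖M_k ψ_θ‖ has at most two nonzero coordinates; and (c) Σ_k p_k · [4(Σ_i p(i|k) E(i)² − (Σ_i p(i|k) E(i))²)] = 4(Σ_i p(i) E(i)² − (Σ_i p(i) E(i))²), where p(i|k) := p(k|i)p(i)/p_k. -/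

import Mathlib

/-- The family of unit vectors `ψ_θ ∈ ℂ^d` with coordinates `√(p i) e^{-iθE i}`. -/
noncomputable def psiVec (d : ℕ) (p E : Fin d → ℝ) (θ : ℝ) : EuclideanSpace ℂ (Fin d) :=
  WithLp.toLp 2 fun i => (Real.sqrt (p i) : ℂ) * Complex.exp (-(Complex.I * θ * E i))

/-- The diagonal measurement operator `M_k = ∑ i √(p(k|i)) |i⟩⟨i|` on `ℂ^d`. -/
noncomputable def measOp (d K : ℕ) (pc : Fin K → Fin d → ℝ) (k : Fin K) :
    Matrix (Fin d) (Fin d) ℂ :=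
  Matrix.diagonal fun i => (Real.sqrt (pc k i) : ℂ)

/-!
Put `ε = ∑ i, p i * E i` and `x i = E i - ε`, so that `p` has zero first moment against `x`. Take
the index `i` of the support of `p` at which `|p i * x i|` is smallest. If this is `0`, the mass
at `i` is balanced by itself; otherwise some `j` carries a term of the opposite sign and at least
the same size, so part of the mass at `j` balances the whole mass at `i`. Splitting off this piece
removes `i` from the support, and iterating writes `p` as a sum of at most `d - 1` weights, each
with mean energy `ε` and supported on at most two points. As these weights all have the same mean,
the law of total variance has no between-class term, which is (c).
-/

section BalancedPair

open Function

variable {ι : Type*}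

theorem ncard_support_sub_lt {M : Type*} [AddGroup M] [Finite ι] {w r : ι → M} {i : ι}
    (hr : support r ⊆ support w) (hi : w i ≠ 0) (hri : r i = w i) :
    (support (w - r)).ncard < (support w).ncard := by
  refine Set.ncard_lt_ncard ⟨?_, fun h ↦ h hi (by simp [hri])⟩
  exact (support_sub w r).trans (Set.union_subset subset_rfl hr)

variable [Fintype ι]

theorem exists_mul_neg_of_sum_eq_zero {R : Type*} [Ring R] [LinearOrder R] [IsStrictOrderedRing R]
    {f : ι → R} (hf : ∑ j, f j = 0) {i : ι} (hi : f i ≠ 0) : ∃ j, f i * f j < 0 := by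
  by_contra! hnonneg
  have hsum : ∑ j, f i * f j = 0 := by rw [← Finset.mul_sum, hf, mul_zero]
  have hzero := (Finset.sum_eq_zero_iff_of_nonneg fun j _ ↦ hnonneg j).1 hsum i (Finset.mem_univ i)
  exact hi (mul_self_eq_zero.1 hzero)

/-- A nonnegative weight with zero first moment against `x`, supported on at most two points: one
piece of the decomposition of a weight with zero first moment. It need not be normalized, and it may
vanish or live on a single zero of `x`. -/
structure IsBalancedPair {R : Type*} [NonUnitalNonAssocSemiring R] [LE R] (x r : ι → R) : Prop where
  nonneg : 0 ≤ r
  dotProduct_eq_zero : r ⬝ᵥ x = 0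
  ncard_support_le_two : (support r).ncard ≤ 2

theorem IsBalancedPair.zero {R : Type*} [NonUnitalNonAssocSemiring R] [Preorder R] (x : ι → R) :
    IsBalancedPair x 0 where
  nonneg := le_rfl
  dotProduct_eq_zero := zero_dotProduct x
  ncard_support_le_two := by simp

theorem isBalancedPair_single_add_single {R : Type*} [NonUnitalNonAssocSemiring R]
    [PartialOrder R] [IsOrderedAddMonoid R] [DecidableEq ι] {x : ι → R} {i j : ι} {a b : R}
    (ha : 0 ≤ a) (hb : 0 ≤ b) (h : a * x i + b * x j = 0) :
    IsBalancedPair x (Pi.single i a + Pi.single j b) where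
  nonneg := add_nonneg (Pi.single_nonneg.2 ha) (Pi.single_nonneg.2 hb)
  dotProduct_eq_zero := by rw [add_dotProduct, single_dotProduct, single_dotProduct, h]
  ncard_support_le_two := by
    have hsub : support (Pi.single i a + Pi.single j b : ι → R) ⊆ {i, j} :=
      support_subset_iff'.2 fun k hk ↦ by simp_all
    exact (Set.ncard_le_ncard hsub).trans ((Set.ncard_insert_le i {j}).trans (by simp))

variable {𝕜 : Type*} [Field 𝕜] [LinearOrder 𝕜] [IsStrictOrderedRing 𝕜]

theorem exists_single_add_single_le [DecidableEq ι] {w x : ι → 𝕜} (hw : 0 ≤ w) (hwx : w ⬝ᵥ x = 0)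
    {i : ι} (hmin : ∀ j ∈ support w, |w i * x i| ≤ |w j * x j|) :
    ∃ j c, 0 ≤ c ∧ w i * x i + c * x j = 0 ∧ Pi.single i (w i) + Pi.single j c ≤ w := by
  obtain hi | hi := eq_or_ne (w i * x i) 0
  · refine ⟨i, 0, le_rfl, by simp [hi], ?_⟩
    rw [Pi.single_zero, add_zero, Pi.single, update_le_iff]
    exact ⟨le_rfl, fun k _ ↦ hw k⟩
  obtain ⟨j, hij⟩ := exists_mul_neg_of_sum_eq_zero hwx hi
  have hwj : w j ≠ 0 := by intro h; simp [h] at hij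
  have hxj : x j ≠ 0 := by intro h; simp [h] at hij
  have hopp : w i * x i * x j < 0 := by
    refine neg_of_mul_neg_left (b := w j) ?_ (hw j)
    linarith
  have hne : i ≠ j := by
    rintro rfl
    nlinarith [mul_nonneg (hw i) (mul_self_nonneg (x i))]
  have hc : -(w i * x i) / x j ≤ w j :=
    calc -(w i * x i) / x j ≤ |-(w i * x i) / x j| := le_abs_self _
      _ = |w i * x i| / |x j| := by rw [abs_div, abs_neg]
      _ ≤ |w j * x j| / |x j| := div_le_div_of_nonneg_right (hmin j hwj) (abs_nonneg _)
      _ = w j := by rw [← abs_div, mul_div_cancel_right₀ _ hxj, abs_of_nonneg (hw j)]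
  refine ⟨j, -(w i * x i) / x j, ?_, by field_simp; ring, fun k ↦ ?_⟩
  · rw [← mul_div_mul_right _ _ hxj]
    exact div_nonneg (by linarith) (mul_self_nonneg _)
  · obtain rfl | hki := eq_or_ne k i
    · simp [hne]
    obtain rfl | hkj := eq_or_ne k j
    · simpa [hki] using hc
    · simpa [hki, hkj] using hw k

theorem exists_isBalancedPair_le {w x : ι → 𝕜} (hw : 0 ≤ w) (hwx : w ⬝ᵥ x = 0) :
    ∃ r ≤ w, IsBalancedPair x r ∧ (support (w - r)).ncard ≤ (support w).ncard - 1 := by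
  classical
  obtain rfl | hw_ne := eq_or_ne w 0
  · exact ⟨0, le_rfl, .zero x, by simp⟩
  obtain ⟨i, hi, hmin⟩ := (support w).exists_min_image (fun j ↦ |w j * x j|) (Set.toFinite _)
    (support_nonempty_iff.2 hw_ne)
  obtain ⟨j, c, hc, hbalance, hle⟩ := exists_single_add_single_le hw hwx hmin
  have hpair := isBalancedPair_single_add_single (hw i) hc hbalance
  refine ⟨_, hle, hpair, Nat.le_sub_one_of_lt (ncard_support_sub_lt ?_ hi ((hle i).antisymm ?_))⟩
  · exact fun k hk hwk ↦ hk (((hle k).trans_eq hwk).antisymm (hpair.nonneg k))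
  · have hsingle : (0 : ι → 𝕜) ≤ Pi.single j c := Pi.single_nonneg.2 hc
    simpa using hsingle i

theorem exists_sum_isBalancedPair (n : ℕ) {w x : ι → 𝕜} (hw : 0 ≤ w) (hwx : w ⬝ᵥ x = 0)
    (hcard : (support w).ncard ≤ n + 2) :
    ∃ q : Fin (n + 1) → ι → 𝕜, ∑ k, q k = w ∧ ∀ k, IsBalancedPair x (q k) := by
  induction n generalizing w with
  | zero => exact ⟨fun _ ↦ w, by simp, fun _ ↦ ⟨hw, hwx, hcard⟩⟩
  | succ n ih =>
    obtain ⟨r, hrw, hr, hcard_sub⟩ := exists_isBalancedPair_le hw hwx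
    obtain ⟨q, hq_sum, hq⟩ := ih (sub_nonneg.2 hrw)
      (by rw [sub_dotProduct, hwx, hr.dotProduct_eq_zero, sub_zero]) (by lia)
    exact ⟨Fin.cons r q, by rw [Fin.sum_cons, hq_sum, add_sub_cancel], Fin.cases hr hq⟩

end BalancedPair

theorem exists_conditional_of_sum_eq {ι κ 𝕜 : Type*} [Fintype κ] [Field 𝕜] [LinearOrder 𝕜]
    [IsStrictOrderedRing 𝕜] {q : κ → ι → 𝕜} {p : ι → 𝕜} (hq : ∀ k, 0 ≤ q k)
    (hqp : ∑ k, q k = p) :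
    ∃ pc : κ → ι → 𝕜, (∀ k, 0 ≤ pc k) ∧ (∀ i, p i ≠ 0 → ∑ k, pc k i = 1) ∧
      ∀ k, pc k * p = q k := by
  have hp : 0 ≤ p := hqp ▸ Finset.sum_nonneg fun k _ ↦ hq k
  have hle (k : κ) : q k ≤ p := hqp ▸ Finset.single_le_sum (fun l _ ↦ hq l) (Finset.mem_univ k)
  refine ⟨fun k ↦ q k / p, fun k i ↦ div_nonneg (hq k i) (hp i), fun i hi ↦ ?_,
    fun k ↦ funext fun i ↦ ?_⟩
  · simp only [Pi.div_apply]
    rw [← Finset.sum_div, ← Finset.sum_apply, hqp, div_self hi]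
  · exact div_mul_cancel_of_imp fun h ↦ ((hle k i).trans_eq h).antisymm (hq k i)

section FisherInformation

variable {ι : Type*} [Fintype ι]

/-- The quantum Fisher information about `θ` of the family `∑ i, √(p i) e^{-iθE i} |i⟩`, that is,
four times the variance of `E` under the probability distribution `p`. -/
def quantumFisherInfo (p E : ι → ℝ) : ℝ :=
  4 * (∑ i, p i * E i ^ 2 - (∑ i, p i * E i) ^ 2)

theorem dotProduct_sub_const {R : Type*} [NonUnitalNonAssocRing R] (p E : ι → R) (ε : R) :
    (p ⬝ᵥ fun i ↦ E i - ε) = ∑ i, p i * E i - (∑ i, p i) * ε := by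
  simp only [dotProduct, mul_sub, Finset.sum_sub_distrib, Finset.sum_mul]

theorem quantumFisherInfo_eq_of_dotProduct_sub_eq_zero {p E : ι → ℝ} {ε : ℝ} (hp : ∑ i, p i = 1)
    (hε : (p ⬝ᵥ fun i ↦ E i - ε) = 0) :
    quantumFisherInfo p E = 4 * (p ⬝ᵥ fun i ↦ (E i - ε) ^ 2) := by
  have hmean : ∑ i, p i * E i = ε := by
    rwa [dotProduct_sub_const, hp, one_mul, sub_eq_zero] at hε
  have hexpand : (p ⬝ᵥ fun i ↦ (E i - ε) ^ 2) =
      ∑ i, p i * E i ^ 2 - 2 * ε * ∑ i, p i * E i + (∑ i, p i) * ε ^ 2 := by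
    simp only [dotProduct, Finset.mul_sum, Finset.sum_mul, ← Finset.sum_sub_distrib,
      ← Finset.sum_add_distrib]
    exact Finset.sum_congr rfl fun i _ ↦ by ring
  rw [quantumFisherInfo, hexpand, hmean, hp]
  ring

theorem sum_mul_quantumFisherInfo_div_sum {q E : ι → ℝ} {ε : ℝ} (hq : 0 ≤ q)
    (hε : (q ⬝ᵥ fun i ↦ E i - ε) = 0) :
    (∑ i, q i) * quantumFisherInfo (fun i ↦ q i / ∑ j, q j) E =
      4 * (q ⬝ᵥ fun i ↦ (E i - ε) ^ 2) := by
  obtain hs | hs := eq_or_ne (∑ i, q i) 0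
  · have hq_zero : q = 0 := (Fintype.sum_eq_zero_iff_of_nonneg hq).1 hs
    simp [hq_zero]
  have hdiv : (fun i ↦ q i / ∑ j, q j) = (∑ j, q j)⁻¹ • q :=
    funext fun i ↦ div_eq_inv_mul (q i) _
  rw [quantumFisherInfo_eq_of_dotProduct_sub_eq_zero (ε := ε), hdiv, smul_dotProduct, smul_eq_mul]
  · field_simp
  · rw [← Finset.sum_div, div_self hs]
  · rw [hdiv, smul_dotProduct, hε, smul_zero]

theorem sum_mul_quantumFisherInfo_eq_of_common_mean {κ : Type*} [Fintype κ] {q : κ → ι → ℝ}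
    {p E : ι → ℝ} {ε : ℝ} (hq : ∀ k, 0 ≤ q k) (hε : ∀ k, (q k ⬝ᵥ fun i ↦ E i - ε) = 0)
    (hqp : ∑ k, q k = p) (hp : ∑ i, p i = 1) :
    ∑ k, (∑ i, q k i) * quantumFisherInfo (fun i ↦ q k i / ∑ j, q k j) E =
      quantumFisherInfo p E := by
  have hpε : (p ⬝ᵥ fun i ↦ E i - ε) = 0 := by
    rw [← hqp, sum_dotProduct, Finset.sum_eq_zero fun k _ ↦ hε k]
  calc ∑ k, (∑ i, q k i) * quantumFisherInfo (fun i ↦ q k i / ∑ j, q k j) E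
      = ∑ k, 4 * (q k ⬝ᵥ fun i ↦ (E i - ε) ^ 2) :=
        Finset.sum_congr rfl fun k _ ↦ sum_mul_quantumFisherInfo_div_sum (hq k) (hε k)
    _ = 4 * (p ⬝ᵥ fun i ↦ (E i - ε) ^ 2) := by rw [← Finset.mul_sum, ← sum_dotProduct, hqp]
    _ = quantumFisherInfo p E := (quantumFisherInfo_eq_of_dotProduct_sub_eq_zero hp hpε).symm

end FisherInformation

section Measurement

variable {d K : ℕ} (pc : Fin K → Fin d → ℝ) (p E : Fin d → ℝ) (k : Fin K) (θ : ℝ)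

theorem toEuclideanLin_measOp_psiVec_apply (i : Fin d) :
    Matrix.toEuclideanLin (measOp d K pc k) (psiVec d p E θ) i =
      √(pc k i) * (√(p i) * Complex.exp (-(Complex.I * θ * E i))) := by
  simp [measOp, psiVec, Matrix.toLpLin_apply, Matrix.mulVec_diagonal]

theorem norm_sq_toEuclideanLin_measOp_psiVec (hpc : 0 ≤ pc k) (hp : 0 ≤ p) :
    ‖Matrix.toEuclideanLin (measOp d K pc k) (psiVec d p E θ)‖ ^ 2 = ∑ i, pc k i * p i := by
  have hphase (i : Fin d) : ‖Complex.exp (-(Complex.I * θ * E i))‖ = 1 := by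
    simp [Complex.norm_exp]
  rw [EuclideanSpace.norm_sq_eq]
  refine Finset.sum_congr rfl fun i _ ↦ ?_
  rw [toEuclideanLin_measOp_psiVec_apply, norm_mul, norm_mul, hphase, mul_one, mul_pow,
    Complex.norm_of_nonneg (Real.sqrt_nonneg _), Complex.norm_of_nonneg (Real.sqrt_nonneg _),
    Real.sq_sqrt (hpc i), Real.sq_sqrt (hp i)]

theorem ncard_smul_toEuclideanLin_measOp_psiVec_ne_zero_le (c : ℝ) :
    {i | (c • Matrix.toEuclideanLin (measOp d K pc k) (psiVec d p E θ)) i ≠ 0}.ncard ≤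
      (Function.support (pc k * p)).ncard := by
  refine Set.ncard_le_ncard fun i hi hzero ↦ hi ?_
  rw [PiLp.smul_apply, toEuclideanLin_measOp_psiVec_apply]
  obtain h | h := mul_eq_zero.1 hzero <;> simp [h]

end Measurement

theorem qfi_compression_into_one_qubit_general
    (d : ℕ) (hd : 2 ≤ d) (E p : Fin d → ℝ) (hp : ∀ i, 0 ≤ p i) (hpsum : ∑ i, p i = 1) :
    ∃ (K : ℕ), K ≤ d - 1 ∧
      ∃ pc : Fin K → Fin d → ℝ,
        (∀ k i, 0 ≤ pc k i) ∧
        (∀ i, 0 < p i → ∑ k, pc k i = 1) ∧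
        (∀ (k : Fin K) (θ : ℝ),
          ‖Matrix.toEuclideanLin (measOp d K pc k) (psiVec d p E θ)‖ ^ 2
            = ∑ i, pc k i * p i) ∧
        (∀ (k : Fin K) (θ : ℝ), 0 < ∑ i, pc k i * p i →
          ({i | (‖Matrix.toEuclideanLin (measOp d K pc k) (psiVec d p E θ)‖⁻¹ •
              Matrix.toEuclideanLin (measOp d K pc k) (psiVec d p E θ)) i ≠ 0} :
            Set (Fin d)).ncard ≤ 2) ∧
        (∑ k, (∑ i, pc k i * p i) *
            (4 * ((∑ i, (pc k i * p i / (∑ j, pc k j * p j)) * E i ^ 2)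
              - (∑ i, (pc k i * p i / (∑ j, pc k j * p j)) * E i) ^ 2))
          = 4 * ((∑ i, p i * E i ^ 2) - (∑ i, p i * E i) ^ 2)) := by
  obtain ⟨n, rfl⟩ : ∃ n, d = n + 2 := ⟨d - 2, by lia⟩
  set ε := ∑ i, p i * E i
  have hpε : (p ⬝ᵥ fun i ↦ E i - ε) = 0 := by
    rw [dotProduct_sub_const, hpsum, one_mul, sub_self]
  obtain ⟨q, hqp, hq⟩ := exists_sum_isBalancedPair n hp hpε
    ((Set.ncard_le_card _).trans_eq (Nat.card_fin _))
  obtain ⟨pc, hpc, hpc_sum, hjoint⟩ := exists_conditional_of_sum_eq (fun k ↦ (hq k).nonneg) hqp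
  obtain rfl : (fun k ↦ pc k * p) = q := funext hjoint
  refine ⟨n + 1, by lia, pc, hpc, fun i hi ↦ hpc_sum i hi.ne',
    fun k θ ↦ norm_sq_toEuclideanLin_measOp_psiVec pc p E k θ (hpc k) hp, fun k θ _ ↦ ?_, ?_⟩
  · exact (ncard_smul_toEuclideanLin_measOp_psiVec_ne_zero_le pc p E k θ _).trans
      (hq k).ncard_support_le_two
  · exact sum_mul_quantumFisherInfo_eq_of_common_mean (fun k ↦ (hq k).nonneg)
      (fun k ↦ (hq k).dotProduct_eq_zero) hqp hpsum

/-- for `d ≥ 2`, injective `E : Fin d → ℝ` and a probability distribution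
`p` on `Fin d`, there exist `K ≤ d - 1` and conditional probabilities `p(k|i)` (summing
to `1` over `k` whenever `p i > 0`) such that, for the diagonal measurement operators
`M_k = ∑ i √(p(k|i)) |i⟩⟨i|` and the family `ψ_θ = ∑ i √(p i) e^{-iθE i} |i⟩`:
(a) the outcome probabilities `‖M_k ψ_θ‖² = ∑ i p(k|i) p(i)` are independent of `θ`;
(b) whenever `p_k > 0`, the normalized post-measurement state `M_k ψ_θ / ‖M_k ψ_θ‖` has
at most two nonzero coordinates; and
(c) the average quantum Fisher information of the post-measurement states equals the
quantum Fisher information `4·Var_p(E)` of `ψ_θ`. -/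
theorem qfi_compression_into_one_qubit
    (d : ℕ) (hd : 2 ≤ d) (E : Fin d → ℝ) (hE : Function.Injective E)
    (p : Fin d → ℝ) (hp : ∀ i, 0 ≤ p i) (hpsum : ∑ i, p i = 1) :
    ∃ (K : ℕ), K ≤ d - 1 ∧
      ∃ pc : Fin K → Fin d → ℝ,
        (∀ k i, 0 ≤ pc k i) ∧
        (∀ i, 0 < p i → ∑ k, pc k i = 1) ∧
        -- (a) outcome probabilities are independent of θ
        (∀ (k : Fin K) (θ : ℝ),
          ‖Matrix.toEuclideanLin (measOp d K pc k) (psiVec d p E θ)‖ ^ 2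
            = ∑ i, pc k i * p i) ∧
        -- (b) the normalized post-measurement state fits in a single qubit
        (∀ (k : Fin K) (θ : ℝ), 0 < ∑ i, pc k i * p i →
          ({i | (‖Matrix.toEuclideanLin (measOp d K pc k) (psiVec d p E θ)‖⁻¹ •
              Matrix.toEuclideanLin (measOp d K pc k) (psiVec d p E θ)) i ≠ 0} :
            Set (Fin d)).ncard ≤ 2) ∧
        -- (c) the average QFI equals the original QFI
        (∑ k, (∑ i, pc k i * p i) *
            (4 * ((∑ i, (pc k i * p i / (∑ j, pc k j * p j)) * E i ^ 2)
              - (∑ i, (pc k i * p i / (∑ j, pc k j * p j)) * E i) ^ 2))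
          = 4 * ((∑ i, p i * E i ^ 2) - (∑ i, p i * E i) ^ 2)) :=
  qfi_compression_into_one_qubit_general d hd E p hp hpsum
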